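/- Let r > 0, a > b > 0, set β = √(r/2)·(√a + √b) and k = (√a − √b)/(√a + √b), let sn, cn, dn : ℝ → ℝ be differentiable functions satisfying sn' = cn·dn, cn' = −sn·dn, dn' = −k²·sn·cn with sn(0) = 0, cn(0) = 1, dn(0) = 1, and define x(t) = a·((dn(βt) + k·cn(βt))/(1 + k))². Assume β = 2·K(k). Then ∫_{t ∈ (0,1)} x(t) dt = (√a + √b)·√(2/r)·E(k) − √(a·b). -/

import Mathlib

/-!
The amplitude `am u = ∫₀ᵘ dn` satisfies `sn = sin ∘ am`, `cn = cos ∘ am` and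
`dn = √(1 - k² sin² am)`. Substituting `θ = am u` in the incomplete integral of the first kind
shows that its value at `am u` is `u`; since its value at `π` is `2K` and it is strictly
increasing, `am (2K) = π`. Hence `sn (2K) = 0`, and the same substitution gives
`∫₀^{2K} dn² = ∫₀^π √(1 - k² sin² θ) dθ = 2E`.

Because `k² cn² = dn² - (1 - k²)` and `cn dn = sn'`, the integrand expands as
`(dn + k cn)² = 2 dn² - (1 - k²) + 2k sn'`, so its integral over `[0, 2K]` is
`4E - (1 - k²) 2K`. The theorem follows from `√a / (1 + k) = (√a + √b) / 2` and
`1 - k² = 4 √(ab) / (√a + √b)²`.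
-/

/-- The complete elliptic integral of the first kind. -/
noncomputable def ellipticK (k : ℝ) : ℝ :=
  ∫ θ in (0:ℝ)..(Real.pi / 2), 1 / Real.sqrt (1 - k ^ 2 * Real.sin θ ^ 2)

/-- The complete elliptic integral of the second kind. -/
noncomputable def ellipticE (k : ℝ) : ℝ :=
  ∫ θ in (0:ℝ)..(Real.pi / 2), Real.sqrt (1 - k ^ 2 * Real.sin θ ^ 2)

/-- By the reflection `θ ↦ π - θ`, a function of `sin θ` integrates over `[0, π]` to twice its
integral over `[0, π/2]`. -/
lemma integral_comp_sin_zero_pi (g : ℝ → ℝ) (hg : Continuous fun θ => g (Real.sin θ)) :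
    (∫ θ in (0:ℝ)..Real.pi, g (Real.sin θ))
      = 2 * ∫ θ in (0:ℝ)..(Real.pi / 2), g (Real.sin θ) := by
  have h1 : (∫ θ in (0:ℝ)..(Real.pi / 2), g (Real.sin θ))
      = ∫ θ in (Real.pi / 2)..Real.pi, g (Real.sin θ) := by
    have h := intervalIntegral.integral_comp_sub_left
      (a := 0) (b := Real.pi / 2) (fun θ => g (Real.sin θ)) Real.pi
    simp only [Real.sin_pi_sub] at h
    rw [h]
    congr 1 <;> ring
  rw [← intervalIntegral.integral_add_adjacent_intervals
    (hg.intervalIntegrable 0 (Real.pi / 2)) (hg.intervalIntegrable (Real.pi / 2) Real.pi), ← h1]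
  ring

/-- Facts on the Jacobi functions over a half period: the two Pythagorean identities,
`sn (2K) = 0`, and `∫₀^{2K} dn² = 2E`. -/
lemma jacobi_half_period (k : ℝ) (hk : k ^ 2 < 1) (sn cn dn : ℝ → ℝ)
    (hsn : ∀ t : ℝ, HasDerivAt sn (cn t * dn t) t)
    (hcn : ∀ t : ℝ, HasDerivAt cn (-(sn t * dn t)) t)
    (hdn : ∀ t : ℝ, HasDerivAt dn (-(k ^ 2 * sn t * cn t)) t)
    (hsn0 : sn 0 = 0) (hcn0 : cn 0 = 1) (hdn0 : dn 0 = 1) :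
    (∀ t, sn t ^ 2 + cn t ^ 2 = 1) ∧ (∀ t, dn t ^ 2 = 1 - k ^ 2 * sn t ^ 2) ∧
      sn (2 * ellipticK k) = 0 ∧
      (∫ u in (0:ℝ)..(2 * ellipticK k), dn u ^ 2) = 2 * ellipticE k := by
  have hconst : ∀ f : ℝ → ℝ, (∀ t, HasDerivAt f 0 t) → ∀ t, f t = f 0 := fun f hf t =>
    is_const_of_deriv_eq_zero (fun t => (hf t).differentiableAt) (fun t => (hf t).deriv) t 0
  have hdnc : Continuous dn := continuous_iff_continuousAt.2 fun t => (hdn t).continuousAt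
  have hsc : ∀ t, sn t ^ 2 + cn t ^ 2 = 1 := by
    intro t
    have := hconst (fun t => sn t ^ 2 + cn t ^ 2) (fun t => by
      refine (((hsn t).pow 2).add ((hcn t).pow 2)).congr_deriv ?_
      simp; ring) t
    simpa [hsn0, hcn0] using this
  have hd2 : ∀ t, dn t ^ 2 = 1 - k ^ 2 * sn t ^ 2 := by
    intro t
    have := hconst (fun t => dn t ^ 2 + k ^ 2 * sn t ^ 2) (fun t => by
      refine (((hdn t).pow 2).add (((hsn t).pow 2).const_mul (k ^ 2))).congr_deriv ?_
      simp; ring) t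
    simp only [hsn0, hdn0] at this
    linarith
  have hdne : ∀ t, dn t ≠ 0 := by
    intro t h
    have h1 := hd2 t
    rw [h] at h1
    nlinarith [hsc t, sq_nonneg (cn t), sq_nonneg (sn t), sq_nonneg k]
  have hdpos : ∀ t, 0 < dn t := by
    intro t
    by_contra hneg
    push Not at hneg
    -- The intermediate value theorem between `0` and `t` would produce a zero of `dn`.
    obtain ⟨s, hs⟩ := mem_range_of_exists_le_of_exists_ge hdnc ⟨t, hneg⟩
      ⟨0, by rw [hdn0]; exact zero_le_one⟩
    exact hdne s hs
  obtain ⟨am, ham, ham0⟩ : ∃ am : ℝ → ℝ, (∀ t, HasDerivAt am (dn t) t) ∧ am 0 = 0 :=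
    ⟨fun u => ∫ s in (0:ℝ)..u, dn s, fun t =>
      intervalIntegral.integral_hasDerivAt_right (hdnc.intervalIntegrable _ _)
        (hdnc.stronglyMeasurableAtFilter _ _) hdnc.continuousAt, by simp⟩
  have hsin : ∀ t, sn t = Real.sin (am t) := by
    intro t
    -- Both pairs solve the same linear system, so their squared distance is constant.
    have := hconst (fun t => (sn t - Real.sin (am t)) ^ 2 + (cn t - Real.cos (am t)) ^ 2)
      (fun t => by
        refine ((((hsn t).sub (ham t).sin).pow 2).add (((hcn t).sub (ham t).cos).pow 2)).congr_deriv ?_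
        simp; ring) t
    simp only [hsn0, hcn0, ham0, Real.sin_zero, Real.cos_zero] at this
    have h0 : (sn t - Real.sin (am t)) ^ 2 = 0 := by
      nlinarith [sq_nonneg (sn t - Real.sin (am t)), sq_nonneg (cn t - Real.cos (am t))]
    exact sub_eq_zero.1 (pow_eq_zero_iff two_ne_zero |>.1 h0)
  have hdsqrt : ∀ t, Real.sqrt (1 - k ^ 2 * Real.sin (am t) ^ 2) = dn t := by
    intro t
    rw [← hsin, ← hd2, Real.sqrt_sq (hdpos t).le]
  have hΔpos : ∀ θ, 0 < Real.sqrt (1 - k ^ 2 * Real.sin θ ^ 2) := by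
    intro θ
    apply Real.sqrt_pos.2
    nlinarith [Real.sin_sq_add_cos_sq θ, sq_nonneg (Real.cos θ), sq_nonneg k]
  have hΔc : Continuous fun θ => Real.sqrt (1 - k ^ 2 * Real.sin θ ^ 2) := by fun_prop
  have hΔic : Continuous fun θ => 1 / Real.sqrt (1 - k ^ 2 * Real.sin θ ^ 2) :=
    continuous_const.div hΔc fun θ => (hΔpos θ).ne'
  have hFpi : (∫ θ in (0:ℝ)..Real.pi, 1 / Real.sqrt (1 - k ^ 2 * Real.sin θ ^ 2))
      = 2 * ellipticK k :=
    integral_comp_sin_zero_pi (fun s => 1 / Real.sqrt (1 - k ^ 2 * s ^ 2)) hΔic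
  have hEpi : (∫ θ in (0:ℝ)..Real.pi, Real.sqrt (1 - k ^ 2 * Real.sin θ ^ 2))
      = 2 * ellipticE k :=
    integral_comp_sin_zero_pi (fun s => Real.sqrt (1 - k ^ 2 * s ^ 2)) hΔc
  have hsub : ∀ (g : ℝ → ℝ), Continuous g → ∀ u,
      (∫ s in (0:ℝ)..u, g (am s) * dn s) = ∫ θ in (0:ℝ)..am u, g θ := by
    intro g hg u
    have := intervalIntegral.integral_comp_mul_deriv (a := 0) (b := u) (f := am) (f' := dn)
      (g := g) (fun t _ => ham t) hdnc.continuousOn hg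
    rw [ham0] at this
    exact this
  have hFam : ∀ u, (∫ θ in (0:ℝ)..am u, 1 / Real.sqrt (1 - k ^ 2 * Real.sin θ ^ 2)) = u := by
    intro u
    rw [← hsub _ hΔic u]
    simp [hdsqrt, hdne]
  have hampi : am (2 * ellipticK k) = Real.pi := by
    have hz : (∫ θ in Real.pi..am (2 * ellipticK k),
        1 / Real.sqrt (1 - k ^ 2 * Real.sin θ ^ 2)) = 0 := by
      rw [← intervalIntegral.integral_interval_sub_left (a := 0)
        (hΔic.intervalIntegrable _ _) (hΔic.intervalIntegrable _ _), hFam, hFpi, sub_self]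
    have hp : ∀ p q : ℝ, p < q →
        0 < ∫ θ in p..q, 1 / Real.sqrt (1 - k ^ 2 * Real.sin θ ^ 2) := fun p q hpq =>
      intervalIntegral.intervalIntegral_pos_of_pos (hΔic.intervalIntegrable _ _)
        (fun θ => one_div_pos.2 (hΔpos θ)) hpq
    rcases lt_trichotomy (am (2 * ellipticK k)) Real.pi with h | h | h
    · have := hp _ _ h
      rw [intervalIntegral.integral_symm] at this
      linarith
    · exact h
    · have := hp _ _ h
      linarith
  refine ⟨hsc, hd2, ?_, ?_⟩
  · rw [hsin, hampi, Real.sin_pi]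
  · have h := hsub _ hΔc (2 * ellipticK k)
    simp only [hdsqrt] at h
    rw [← hEpi, ← hampi, ← h]
    simp only [sq]

/-- If `β = 2K(k)` then `∫₀¹ x(t) dt = (√a + √b)√(2/r) E(k) − √(ab)` for
`x(t) = a((dn(βt) + k cn(βt))/(1+k))²`. -/
theorem integral_x_over_unit_interval (r a b : ℝ) (hr : r > 0)
    (hab : a > b) (hb : b > 0) (β k : ℝ)
    (hβ : β = Real.sqrt (r / 2) * (Real.sqrt a + Real.sqrt b))
    (hk : k = (Real.sqrt a - Real.sqrt b) / (Real.sqrt a + Real.sqrt b))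
    (sn cn dn : ℝ → ℝ)
    (hsn : ∀ t : ℝ, HasDerivAt sn (cn t * dn t) t)
    (hcn : ∀ t : ℝ, HasDerivAt cn (-(sn t * dn t)) t)
    (hdn : ∀ t : ℝ, HasDerivAt dn (-(k ^ 2 * sn t * cn t)) t)
    (hsn0 : sn 0 = 0) (hcn0 : cn 0 = 1) (hdn0 : dn 0 = 1)
    (x : ℝ → ℝ)
    (hxdef : ∀ t : ℝ, x t = a * ((dn (β * t) + k * cn (β * t)) / (1 + k)) ^ 2)
    (hcond : β = 2 * ellipticK k) :
    (∫ t in (0:ℝ)..1, x t) =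
      (Real.sqrt a + Real.sqrt b) * Real.sqrt (2 / r) * ellipticE k
        - Real.sqrt (a * b) := by
  have ha : 0 < a := hb.trans hab
  have hp : 0 < Real.sqrt a := Real.sqrt_pos.2 ha
  have hq : 0 < Real.sqrt b := Real.sqrt_pos.2 hb
  have hpa : Real.sqrt a ^ 2 = a := Real.sq_sqrt ha.le
  have hw : 0 < Real.sqrt (r / 2) := Real.sqrt_pos.2 (by positivity)
  have hw2 : Real.sqrt (2 / r) = (Real.sqrt (r / 2))⁻¹ := by
    rw [← Real.sqrt_inv, inv_div]
  rw [Real.sqrt_mul ha.le, hw2]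
  generalize Real.sqrt a = p at *
  generalize Real.sqrt b = q at *
  generalize Real.sqrt (r / 2) = w at *
  have hβpos : 0 < β := by rw [hβ]; positivity
  have h1k : 1 + k = 2 * p / (p + q) := by rw [hk]; field_simp; ring
  have h1k2 : 1 - k ^ 2 = 4 * (p * q) / (p + q) ^ 2 := by rw [hk]; field_simp; ring
  have hk2 : k ^ 2 < 1 := by
    have : 0 < 1 - k ^ 2 := by rw [h1k2]; positivity
    linarith
  obtain ⟨hsc, hd2, hs0, hdE⟩ := jacobi_half_period k hk2 sn cn dn hsn hcn hdn hsn0 hcn0 hdn0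
  rw [← hcond] at hs0 hdE
  have hdnc : Continuous dn := continuous_iff_continuousAt.2 fun t => (hdn t).continuousAt
  have hcnc : Continuous cn := continuous_iff_continuousAt.2 fun t => (hcn t).continuousAt
  have hcd : (∫ u in (0:ℝ)..β, cn u * dn u) = 0 := by
    rw [intervalIntegral.integral_eq_sub_of_hasDerivAt (fun t _ => hsn t)
      ((hcnc.mul hdnc).intervalIntegrable _ _), hs0, hsn0, sub_self]
  have hI : (∫ u in (0:ℝ)..β, (dn u + k * cn u) ^ 2)
      = 4 * ellipticE k - (1 - k ^ 2) * β := by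
    have he : ∀ u, (dn u + k * cn u) ^ 2
        = (2 * dn u ^ 2 - (1 - k ^ 2)) + 2 * k * (cn u * dn u) := fun u => by
      linear_combination (-1 : ℝ) * hd2 u + k ^ 2 * hsc u
    simp only [he]
    rw [intervalIntegral.integral_add, intervalIntegral.integral_sub,
      intervalIntegral.integral_const_mul, intervalIntegral.integral_const_mul, hdE, hcd,
      intervalIntegral.integral_const, smul_eq_mul]
    · ring
    all_goals apply Continuous.intervalIntegrable; fun_prop
  have hx : ∀ t, x t = (p + q) ^ 2 / 4 * (dn (β * t) + k * cn (β * t)) ^ 2 := fun t => by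
    rw [hxdef, h1k, ← hpa]; field_simp; ring
  simp only [hx]
  rw [intervalIntegral.integral_const_mul,
    intervalIntegral.integral_comp_mul_left (fun u => (dn u + k * cn u) ^ 2) hβpos.ne',
    mul_zero, mul_one, hI, h1k2, smul_eq_mul, hβ]
  field_simp
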